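/- For every λ > 0 and every θ ∈ ℝ, at least one of the following holds: for all odd k ≥ 1 and all E ∈ ℝ, x_k(E, λ, θ) = x_k(E, λ, 0), or for all even k ≥ 0 and all E ∈ ℝ, x_k(E, λ, θ) = x_k(E, λ, 0). -/

import Mathlib

/-- `ω = (√5 - 1)/2`, the inverse of the golden mean. -/
noncomputable def goldenOmega : ℝ := (Real.sqrt 5 - 1) / 2

/-- The Fibonacci potential: `v_θ(n) = 1` if the fractional part of `nω + θ`
lies in `[1 - ω, 1)`, and `0` otherwise. -/
noncomputable def vTheta (θ : ℝ) (n : ℤ) : ℝ :=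
  if Int.fract ((n : ℝ) * goldenOmega + θ) ∈ Set.Ico (1 - goldenOmega) 1 then 1 else 0

/-- The one-step transfer matrix `T(m, E, λ, θ)` with rows
`(E - λ v_θ(m), -1)` and `(1, 0)`. -/
noncomputable def Tmat (lam θ E : ℝ) (m : ℤ) : Matrix (Fin 2) (Fin 2) ℝ :=
  !![E - lam * vTheta θ m, -1; 1, 0]

/-- The transfer matrix over `[1, n]`:
`M(n, E, λ, θ) = T(n, E, λ, θ) ⋯ T(1, E, λ, θ)` (with `M(0) = 1`). -/
noncomputable def Mmat (lam θ E : ℝ) : ℕ → Matrix (Fin 2) (Fin 2) ℝ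
  | 0 => 1
  | n + 1 => Tmat lam θ E ((n : ℤ) + 1) * Mmat lam θ E n

/-- The trace `x_k(E, λ, θ) = tr M(F_k, E, λ, θ)`, where `F_k = Nat.fib (k + 2)`
(the paper's Fibonacci numbers `F_{-1} = F_0 = 1`, `F_k = F_{k-1} + F_{k-2}`). -/
noncomputable def xTrace (lam θ : ℝ) (k : ℕ) (E : ℝ) : ℝ :=
  Matrix.trace (Mmat lam θ E (Nat.fib (k + 2)))

/-!
The values of the Fibonacci potential are the letters `⌊(n + 1)ω + θ⌋ - ⌊nω + θ⌋` of a mechanical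
word of slope `ω`. Over one period `q = F_k`, this word does not change when `ω` is replaced by its
convergent `p / q` and `θ` by a suitable multiple of `1 / q`, provided that the total displacement
`q (qω - p)` is less than `1` in modulus and that the floors at the two ends `n = 1` and
`n = q + 1` still differ by exactly `p`. Words of slope `p / q` and length `q` do not depend on
their phase `d / q` up to rotation, because adding `p` to `d` rotates the word and adding `q` leaves
it unchanged. A trace of a product does not see rotations.

The condition at the ends says that `ω + θ` and `ω + θ + (qω - p)` have the same floor. The sign of
`qω - p` alternates with `k`, so the condition holds for all even `k` if `v_θ(1) = 1`, and for all
odd `k` if `v_θ(1) = 0`; the phase `θ = 0` satisfies it for all `k`.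
-/

open List in
lemma isRotated_map_succ_range {β : Type*} {g : ℕ → β} {n : ℕ} (h : g n = g 0) :
    (range n).map (fun i => g (i + 1)) ~r (range n).map g := by
  cases n with
  | zero => rfl
  | succ n =>
    rw [range_succ, map_append, map_singleton, h, ← range_succ, range_succ_eq_map, map_cons,
      map_map]
    exact isRotated_concat _ _

lemma trace_prod_eq_of_isRotated {m R : Type*} [Fintype m] [DecidableEq m] [CommSemiring R]
    {l l' : List (Matrix m m R)} (h : l ~r l') : l.prod.trace = l'.prod.trace := by
  obtain ⟨n, rfl⟩ := h
  rw [List.rotate_eq_drop_append_take_mod, List.prod_append, Matrix.trace_mul_comm,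
    ← List.prod_append, List.take_append_drop]

lemma eq_of_periodic_of_isCoprime {β : Type*} {f : ℤ → β} {a b : ℤ} (hab : IsCoprime a b)
    (ha : Function.Periodic f a) (hb : Function.Periodic f b) (x y : ℤ) : f x = f y := by
  obtain ⟨u, v, huv⟩ := hab
  have hx : x = y + (x - y) * u * a + (x - y) * v * b := by linear_combination (y - x) * huv
  rw [hx]
  exact (hb.int_mul _ _).trans (ha.int_mul _ _)

lemma eq_or_eq_ends_of_dvd_sub {m n q : ℕ} (hm : 1 ≤ m ∧ m ≤ q + 1) (hn : 1 ≤ n ∧ n ≤ q + 1)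
    (h : (q : ℤ) ∣ m - n) : m = n ∨ (m = q + 1 ∧ n = 1) ∨ (m = 1 ∧ n = q + 1) := by
  rcases lt_trichotomy m n with hmn | hmn | hmn
  · have := Int.le_of_dvd (by omega) (dvd_sub_comm.1 h)
    omega
  · exact .inl hmn
  · have := Int.le_of_dvd (by omega) h
    omega

/-- The mechanical word of slope `α` and phase `θ`: the differences of consecutive terms of
`⌊i α + θ⌋` for `1 ≤ i ≤ n + 1`. The letters are numbered from `1`, as in the transfer matrix over
`[1, n]`. -/
noncomputable def mechanicalWord (α θ : ℝ) (n : ℕ) : List ℤ :=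
  (List.range n).map fun i => ⌊((i + 2 : ℕ) : ℝ) * α + θ⌋ - ⌊((i + 1 : ℕ) : ℝ) * α + θ⌋

namespace mechanicalWord

lemma congr {α β θ η : ℝ} {n : ℕ}
    (h : ∀ i : ℕ, 1 ≤ i → i ≤ n + 1 → ⌊(i : ℝ) * α + θ⌋ = ⌊(i : ℝ) * β + η⌋) :
    mechanicalWord α θ n = mechanicalWord β η n := by
  refine List.map_congr_left fun i hi => ?_
  have hi : i < n := List.mem_range.1 hi
  rw [h (i + 2) (by omega) (by omega), h (i + 1) (by omega) (by omega)]

lemma phase_add_one (α θ : ℝ) (n : ℕ) : mechanicalWord α (θ + 1) n = mechanicalWord α θ n := by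
  simp only [mechanicalWord, ← add_assoc, Int.floor_add_one, add_sub_add_right_eq_sub]

lemma phase_add_slope_isRotated {α : ℝ} {n : ℕ} {p : ℤ} (h : n * α = p) (θ : ℝ) :
    mechanicalWord α (θ + α) n ~r mechanicalWord α θ n := by
  have hshift : mechanicalWord α (θ + α) n = (List.range n).map fun i =>
      ⌊((i + 1 + 2 : ℕ) : ℝ) * α + θ⌋ - ⌊((i + 1 + 1 : ℕ) : ℝ) * α + θ⌋ := by
    refine List.map_congr_left fun i _ => ?_
    push_cast
    ring_nf
  have hperiod (j : ℕ) : ⌊((n + j : ℕ) : ℝ) * α + θ⌋ = ⌊((0 + j : ℕ) : ℝ) * α + θ⌋ + p := by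
    rw [← Int.floor_add_intCast, ← h]
    push_cast
    ring_nf
  rw [hshift]
  refine isRotated_map_succ_range
    (g := fun i : ℕ => ⌊((i + 2 : ℕ) : ℝ) * α + θ⌋ - ⌊((i + 1 : ℕ) : ℝ) * α + θ⌋) ?_
  simp only [hperiod, add_sub_add_right_eq_sub]

section RationalApproximation

variable {p : ℤ} {q : ℕ}

lemma isRotated_phase_div (hq : 0 < q) (hpq : IsCoprime p q) (d e : ℤ) :
    mechanicalWord (p / q) (d / q) q ~r mechanicalWord (p / q) (e / q) q := by
  have hq' : (q : ℝ) ≠ 0 := by positivity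
  refine Cycle.coe_eq_coe.1 (eq_of_periodic_of_isCoprime
    (f := fun d : ℤ => (mechanicalWord (p / q) (d / q) q : Cycle ℤ)) hpq ?_ ?_ d e)
  · intro d
    simp only [Int.cast_add, add_div]
    exact Cycle.coe_eq_coe.2 (phase_add_slope_isRotated (mul_div_cancel₀ _ hq') _)
  · intro d
    simp only [Int.cast_add, Int.cast_natCast, add_div, div_self hq', phase_add_one]

variable {α θ : ℝ}

lemma mul_floor_sub_lt (hq : 0 < q) (hpq : IsCoprime p q) (happrox : |q * (q * α - p)| < 1)
    (hends : ⌊(q + 1) * α + θ⌋ = ⌊α + θ⌋ + p) {m n : ℕ}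
    (hm : 1 ≤ m ∧ m ≤ q + 1) (hn : 1 ≤ n ∧ n ≤ q + 1) :
    q * ⌊(m : ℝ) * α + θ⌋ - m * p < q * ⌊(n : ℝ) * α + θ⌋ - n * p + q := by
  have hq' : (0 : ℝ) < q := by exact_mod_cast hq
  have hdrift : (m - n) * (q * α - p) < 1 := by
    have hmn : |(m : ℝ) - n| ≤ |(q : ℝ)| := by
      rw [abs_of_pos hq', abs_sub_le_iff, sub_le_iff_le_add, sub_le_iff_le_add]
      exact_mod_cast (by omega : m ≤ q + n ∧ n ≤ q + m)
    calc (m - n) * (q * α - p) ≤ |((m : ℝ) - n) * (q * α - p)| := le_abs_self _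
      _ ≤ |q * (q * α - p)| := by rw [abs_mul, abs_mul]; gcongr
      _ < 1 := happrox
  have hle : q * ⌊(m : ℝ) * α + θ⌋ - m * p ≤ q * ⌊(n : ℝ) * α + θ⌋ - n * p + q := by
    rw [← Int.lt_add_one_iff]
    have hfm := mul_le_mul_of_nonneg_left (Int.floor_le ((m : ℝ) * α + θ)) hq'.le
    have hfn := mul_lt_mul_of_pos_left (Int.lt_floor_add_one ((n : ℝ) * α + θ)) hq'
    rify
    linarith
  refine lt_of_le_of_ne hle fun heq => ?_
  have hdvd : (q : ℤ) ∣ m - n :=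
    hpq.symm.dvd_of_dvd_mul_right
      ⟨⌊(m : ℝ) * α + θ⌋ - ⌊(n : ℝ) * α + θ⌋ - 1, by linear_combination -heq⟩
  have hq_ne : (q : ℤ) ≠ 0 := by omega
  obtain rfl | ⟨rfl, rfl⟩ | ⟨rfl, rfl⟩ := eq_or_eq_ends_of_dvd_sub hm hn hdvd
  · exact hq_ne (by linarith)
  all_goals
    simp only [Nat.cast_add, Nat.cast_one, one_mul, hends] at heq
    exact hq_ne (by linarith)

lemma exists_eq_rational_slope (hq : 0 < q) (hpq : IsCoprime p q) (happrox : |q * (q * α - p)| < 1)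
    (hends : ⌊(q + 1) * α + θ⌋ = ⌊α + θ⌋ + p) :
    ∃ d : ℤ, mechanicalWord α θ q = mechanicalWord (p / q) (d / q) q := by
  -- The phases `d` with `⌊n * α + θ⌋ = ⌊(n * p + d) / q⌋` are those in `[r n, r n + q)`; these
  -- intervals overlap pairwise, so the largest left end lies in all of them.
  let r (n : ℕ) : ℤ := q * ⌊(n : ℝ) * α + θ⌋ - n * p
  obtain ⟨m, hm, hmax⟩ :=
    (Finset.Icc 1 (q + 1)).exists_max_image r ⟨1, Finset.mem_Icc.2 ⟨le_rfl, by omega⟩⟩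
  refine ⟨r m, congr fun n hn₁ hn₂ => ?_⟩
  have hq' : (0 : ℝ) < q := by exact_mod_cast hq
  have hlower : (q * ⌊(n : ℝ) * α + θ⌋ - n * p : ℝ) ≤ r m := by
    exact_mod_cast hmax n (Finset.mem_Icc.2 ⟨hn₁, hn₂⟩)
  have hupper : (r m : ℝ) < q * ⌊(n : ℝ) * α + θ⌋ - n * p + q := by
    exact_mod_cast mul_floor_sub_lt hq hpq happrox hends (Finset.mem_Icc.1 hm) ⟨hn₁, hn₂⟩
  rw [eq_comm, Int.floor_eq_iff, ← mul_div_assoc, ← add_div, le_div_iff₀ hq', div_lt_iff₀ hq']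
  constructor <;> linarith

lemma isRotated_rational_slope (hq : 0 < q) (hpq : IsCoprime p q) (happrox : |q * (q * α - p)| < 1)
    (hends : ⌊(q + 1) * α + θ⌋ = ⌊α + θ⌋ + p) (e : ℤ) :
    mechanicalWord α θ q ~r mechanicalWord (p / q) (e / q) q := by
  obtain ⟨d, hd⟩ := exists_eq_rational_slope hq hpq happrox hends
  rw [hd]
  exact isRotated_phase_div hq hpq d e

end RationalApproximation

end mechanicalWord

lemma neg_goldenOmega_eq_goldenConj : -goldenOmega = Real.goldenConj := by
  rw [goldenOmega, Real.goldenConj]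
  ring

lemma goldenOmega_eq_inv_goldenRatio : goldenOmega = Real.goldenRatio⁻¹ := by
  rw [Real.inv_goldenRatio, ← neg_goldenOmega_eq_goldenConj, neg_neg]

lemma goldenOmega_pos : 0 < goldenOmega :=
  goldenOmega_eq_inv_goldenRatio ▸ inv_pos.2 Real.goldenRatio_pos

lemma goldenOmega_lt_one : goldenOmega < 1 :=
  goldenOmega_eq_inv_goldenRatio ▸ inv_lt_one_of_one_lt₀ Real.one_lt_goldenRatio

lemma goldenOmega_sq : goldenOmega ^ 2 = 1 - goldenOmega := by
  rw [← neg_sq, neg_goldenOmega_eq_goldenConj, Real.goldenConj_sq, ← neg_goldenOmega_eq_goldenConj]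
  ring

lemma fib_succ_mul_goldenOmega_sub_fib (n : ℕ) :
    Nat.fib (n + 1) * goldenOmega - Nat.fib n = -(-goldenOmega) ^ (n + 1) := by
  have hratio : Real.goldenRatio = 1 + goldenOmega := by
    rw [← Real.one_sub_goldenRatio, ← neg_goldenOmega_eq_goldenConj, sub_neg_eq_add]
  rw [neg_goldenOmega_eq_goldenConj, ← Real.fib_succ_sub_goldenRatio_mul_fib, hratio,
    Nat.fib_add_two, Nat.cast_add]
  ring

lemma fib_mul_goldenOmega_pow_lt_one (n : ℕ) : Nat.fib n * goldenOmega ^ n < 1 := by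
  rw [goldenOmega_eq_inv_goldenRatio, inv_pow, ← div_eq_mul_inv,
    div_lt_one (pow_pos Real.goldenRatio_pos n)]
  cases n with
  | zero => simp
  | succ n =>
    have hfib : (0 : ℝ) < Nat.fib (n + 1) := by exact_mod_cast Nat.fib_pos.2 n.succ_pos
    calc (Nat.fib (n + 1) : ℝ) < Real.goldenRatio * Nat.fib (n + 1) :=
          lt_mul_of_one_lt_left hfib Real.one_lt_goldenRatio
      _ ≤ Real.goldenRatio * Nat.fib (n + 1) + Nat.fib n := le_add_of_nonneg_right (by positivity)
      _ = Real.goldenRatio ^ (n + 1) := Real.goldenRatio_mul_fib_succ_add_fib n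

lemma mechanicalWord_goldenOmega_isRotated_convergent {θ : ℝ} {k : ℕ}
    (h : Int.fract (goldenOmega + θ) - (-goldenOmega) ^ (k + 2) ∈ Set.Ico (0 : ℝ) 1) :
    mechanicalWord goldenOmega θ (Nat.fib (k + 2)) ~r
      mechanicalWord (Nat.fib (k + 1) / Nat.fib (k + 2)) 0 (Nat.fib (k + 2)) := by
  have hq : 0 < Nat.fib (k + 2) := Nat.fib_pos.2 (by omega)
  have hcoprime : IsCoprime (Nat.fib (k + 1) : ℤ) (Nat.fib (k + 2)) :=
    Nat.isCoprime_iff_coprime.2 (Nat.fib_coprime_fib_succ (k + 1))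
  have herror := fib_succ_mul_goldenOmega_sub_fib (k + 1)
  have happrox : |(Nat.fib (k + 2) : ℝ) *
      (Nat.fib (k + 2) * goldenOmega - (Nat.fib (k + 1) : ℤ))| < 1 := by
    rw [Int.cast_natCast, herror, abs_mul, abs_neg, abs_pow, abs_neg, Nat.abs_cast,
      abs_of_pos goldenOmega_pos]
    exact fib_mul_goldenOmega_pow_lt_one (k + 2)
  have hends : ⌊((Nat.fib (k + 2) : ℝ) + 1) * goldenOmega + θ⌋ =
      ⌊goldenOmega + θ⌋ + (Nat.fib (k + 1) : ℤ) := by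
    have hfloor := Int.floor_add_fract (goldenOmega + θ)
    rw [Int.floor_eq_iff]
    push_cast
    constructor <;> linarith [h.1, h.2]
  simpa using mechanicalWord.isRotated_rational_slope hq hcoprime happrox hends 0

lemma fract_sub_neg_goldenOmega_pow_mem_Ico_of_odd {x : ℝ} {k : ℕ} (hk : Odd k)
    (hx : Int.fract x < 1 - goldenOmega ^ 3) :
    Int.fract x - (-goldenOmega) ^ (k + 2) ∈ Set.Ico (0 : ℝ) 1 := by
  have hle : goldenOmega ^ (k + 2) ≤ goldenOmega ^ 3 :=
    pow_le_pow_of_le_one goldenOmega_pos.le goldenOmega_lt_one.le (by have := hk.pos; omega)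
  rw [(hk.add_even even_two).neg_pow, sub_neg_eq_add]
  exact ⟨add_nonneg (Int.fract_nonneg x) (pow_pos goldenOmega_pos _).le, by linarith⟩

lemma fract_sub_neg_goldenOmega_pow_mem_Ico_of_even {x : ℝ} {k : ℕ} (hk : Even k)
    (hx : 1 - goldenOmega ≤ Int.fract x) :
    Int.fract x - (-goldenOmega) ^ (k + 2) ∈ Set.Ico (0 : ℝ) 1 := by
  have hle : goldenOmega ^ (k + 2) ≤ goldenOmega ^ 2 :=
    pow_le_pow_of_le_one goldenOmega_pos.le goldenOmega_lt_one.le (by omega)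
  rw [(hk.add even_two).neg_pow]
  constructor
  · linarith [goldenOmega_sq]
  · linarith [Int.fract_lt_one x, pow_pos goldenOmega_pos (k + 2)]

lemma mechanicalWord_goldenOmega_isRotated_phase_zero (θ : ℝ) :
    (∀ k, Odd k → mechanicalWord goldenOmega θ (Nat.fib (k + 2)) ~r
      mechanicalWord goldenOmega 0 (Nat.fib (k + 2))) ∨
    (∀ k, Even k → mechanicalWord goldenOmega θ (Nat.fib (k + 2)) ~r
      mechanicalWord goldenOmega 0 (Nat.fib (k + 2))) := by
  have hpow : goldenOmega ^ 3 < goldenOmega ^ 2 :=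
    pow_lt_pow_right_of_lt_one₀ goldenOmega_pos goldenOmega_lt_one (by norm_num)
  have hsq : goldenOmega ^ 2 < goldenOmega :=
    pow_lt_self_of_lt_one₀ goldenOmega_pos goldenOmega_lt_one (by norm_num)
  have hω : Int.fract (goldenOmega + 0) = goldenOmega := by
    rw [add_zero, Int.fract_eq_self.2 ⟨goldenOmega_pos.le, goldenOmega_lt_one⟩]
  rcases lt_or_ge (Int.fract (goldenOmega + θ)) (1 - goldenOmega) with h | h
  · refine .inl fun k hk => ?_
    have hθ := fract_sub_neg_goldenOmega_pow_mem_Ico_of_odd hk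
      (h.trans (by linarith : 1 - goldenOmega < 1 - goldenOmega ^ 3))
    have h0 := fract_sub_neg_goldenOmega_pow_mem_Ico_of_odd hk
      (hω.trans_lt (by linarith [goldenOmega_sq] : goldenOmega < 1 - goldenOmega ^ 3))
    exact (mechanicalWord_goldenOmega_isRotated_convergent hθ).trans
      (mechanicalWord_goldenOmega_isRotated_convergent h0).symm
  · refine .inr fun k hk => ?_
    have hθ := fract_sub_neg_goldenOmega_pow_mem_Ico_of_even hk h
    have h0 := fract_sub_neg_goldenOmega_pow_mem_Ico_of_even hk
      (x := goldenOmega + 0) (by linarith [goldenOmega_sq])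
    exact (mechanicalWord_goldenOmega_isRotated_convergent hθ).trans
      (mechanicalWord_goldenOmega_isRotated_convergent h0).symm

lemma floor_add_sub_floor_eq_ite {R : Type*} [CommRing R] [LinearOrder R] [IsStrictOrderedRing R]
    [FloorRing R] {a : R} (ha₀ : 0 ≤ a) (ha₁ : a ≤ 1) (x : R) :
    ⌊x + a⌋ - ⌊x⌋ = if Int.fract x ∈ Set.Ico (1 - a) 1 then 1 else 0 := by
  have hx := Int.floor_add_fract x
  have hx₀ := Int.fract_nonneg x
  have hx₁ := Int.fract_lt_one x
  rw [sub_eq_iff_eq_add, Int.floor_eq_iff]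
  split_ifs with h
  · push_cast
    constructor <;> linarith [h.1]
  · have hlt : Int.fract x < 1 - a := lt_of_not_ge fun hge => h ⟨hge, hx₁⟩
    push_cast
    constructor <;> linarith

lemma vTheta_eq_floor_sub_floor (θ : ℝ) (n : ℤ) :
    vTheta θ n =
      (⌊((n + 1 : ℤ) : ℝ) * goldenOmega + θ⌋ - ⌊(n : ℝ) * goldenOmega + θ⌋ : ℤ) := by
  have hsucc : ((n + 1 : ℤ) : ℝ) * goldenOmega + θ = n * goldenOmega + θ + goldenOmega := by
    push_cast
    ring
  rw [hsucc, floor_add_sub_floor_eq_ite goldenOmega_pos.le goldenOmega_lt_one.le]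
  push_cast
  rfl

lemma Mmat_eq_prod_mechanicalWord (lam θ E : ℝ) (n : ℕ) :
    Mmat lam θ E n = ((mechanicalWord goldenOmega θ n).map
      fun v : ℤ => !![E - lam * v, -1; 1, 0]).reverse.prod := by
  induction n with
  | zero => simp [Mmat, mechanicalWord]
  | succ n ih =>
    rw [Mmat, ih, Tmat, vTheta_eq_floor_sub_floor]
    simp [mechanicalWord, List.range_succ, add_assoc, one_add_one_eq_two]

/-- Here `A v` takes the place of `T` at a site where the potential equals `v`, and the reversal
puts later factors on the left, as in `M`. -/
theorem xTrace_phase_invariance_general {m R : Type*} [Fintype m] [DecidableEq m]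
    [CommSemiring R] (θ : ℝ) :
    (∀ k, Odd k → ∀ A : ℤ → Matrix m m R,
      ((mechanicalWord goldenOmega θ (Nat.fib (k + 2))).map A).reverse.prod.trace =
        ((mechanicalWord goldenOmega 0 (Nat.fib (k + 2))).map A).reverse.prod.trace) ∨
    (∀ k, Even k → ∀ A : ℤ → Matrix m m R,
      ((mechanicalWord goldenOmega θ (Nat.fib (k + 2))).map A).reverse.prod.trace =
        ((mechanicalWord goldenOmega 0 (Nat.fib (k + 2))).map A).reverse.prod.trace) :=
  (mechanicalWord_goldenOmega_isRotated_phase_zero θ).imp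
    (fun h k hk A => trace_prod_eq_of_isRotated ((h k hk).map A).reverse)
    (fun h k hk A => trace_prod_eq_of_isRotated ((h k hk).map A).reverse)

/-- For every `λ > 0` and every `θ`, either for all odd `k ≥ 1` and all `E ∈ ℝ` we have
`x_k(E, λ, θ) = x_k(E, λ, 0)`, or for all even `k ≥ 0` and all `E ∈ ℝ` we have
`x_k(E, λ, θ) = x_k(E, λ, 0)`. -/
theorem xTrace_phase_invariance (lam : ℝ) (hlam : 0 < lam) (θ : ℝ) :
    (∀ k, Odd k → ∀ E : ℝ, xTrace lam θ k E = xTrace lam 0 k E) ∨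
    (∀ k, Even k → ∀ E : ℝ, xTrace lam θ k E = xTrace lam 0 k E) := by
  simp only [xTrace, Mmat_eq_prod_mechanicalWord]
  exact (xTrace_phase_invariance_general θ).imp (fun h k hk _ => h k hk _) fun h k hk _ => h k hk _
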